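/- arXiv:2204.04496 — 4 statements merged into one kernel-verified Lean document; each statement's English description precedes it below -/
import Mathlib

section
/- Suppose x* is a minimizer of the linear program min { ⟨p(x*), X⟩ : (I − A)X ≥ c(λ*) componentwise, BX ≤ r(v*) componentwise, X ∈ ℝ₊ⁿ } and (λ*, v*) is a maximizer of the dual linear program max { ⟨c(λ*), Λ⟩ − ⟨r(v*), V⟩ : (I − A)ᵀΛ − BᵀV ≤ p(x*) componentwise, Λ ∈ ℝ₊ⁿ, V ∈ ℝ₊ᵐ }. Then y* = (x*, λ*, v*) solves the variational inequality: ⟨g(y*), y − y*⟩ ≤ 0 for all y ∈ Ω. -/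
open Matrix Filter
open scoped BigOperators

noncomputable section

/-- Vectors in ℝ^k. -/
abbrev Vec (k : ℕ) := Fin k → ℝ

/-- Standard Euclidean inner product on ℝ^k. -/
def ip {k : ℕ} (u v : Vec k) : ℝ := ∑ i, u i * v i

/-- Standard Euclidean norm on ℝ^k. -/
def nrm {k : ℕ} (u : Vec k) : ℝ := Real.sqrt (ip u u)

/-- The space ℝⁿ × ℝⁿ × ℝᵐ of triples y = (x, λ, v). -/
abbrev Triple (n m : ℕ) := Vec n × Vec n × Vec m

/-- Euclidean inner product on the triple space. -/
def ipT {n m : ℕ} (y z : Triple n m) : ℝ :=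
  ip y.1 z.1 + ip y.2.1 z.2.1 + ip y.2.2 z.2.2

/-- Euclidean norm on the triple space. -/
def nrmT {n m : ℕ} (y : Triple n m) : ℝ := Real.sqrt (ipT y y)

/-- Ω = ℝ₊ⁿ × ℝ₊ⁿ × ℝ₊ᵐ. -/
def Om (n m : ℕ) : Set (Triple n m) :=
  {y | (∀ j, 0 ≤ y.1 j) ∧ (∀ j, 0 ≤ y.2.1 j) ∧ (∀ i, 0 ≤ y.2.2 i)}

/-- The operator g(x, λ, v) = ((I − A)ᵀλ − p(x) − Bᵀv, c(λ) − (I − A)x, Bx − r(v)). -/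
def gOp {n m : ℕ} (A : Matrix (Fin n) (Fin n) ℝ) (B : Matrix (Fin m) (Fin n) ℝ)
    (p c : Vec n → Vec n) (r : Vec m → Vec m) (y : Triple n m) : Triple n m :=
  ((1 - A)ᵀ *ᵥ y.2.1 - p y.1 - Bᵀ *ᵥ y.2.2,
   c y.2.1 - (1 - A) *ᵥ y.1,
   B *ᵥ y.1 - r y.2.2)

/-- P_Ω : componentwise positive part (Euclidean projection onto Ω). -/
def projOm {n m : ℕ} (y : Triple n m) : Triple n m :=
  (fun j => max (y.1 j) 0, fun j => max (y.2.1 j) 0, fun i => max (y.2.2 i) 0)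

/-!
Farkas' lemma, proved over any ordered field by eliminating one functional at a time, gives for an
optimal solution of a linear program a dual feasible point whose objective value is at least as
large, so there is no duality gap. At a feasible primal-dual pair the constraint residuals pair
nonpositively with nonnegative vectors, so the left-hand side of the variational inequality is at
most the duality gap.
-/

open Module PointedCone

variable {K : Type*} [Field K]

section KerProj

variable {E : Type*} [AddCommGroup E] [Module K E]

/-- The projection of `E` onto the kernel of the functional `a` along `z`, used to eliminate `a`
from a system of linear inequalities. It is a projection only if `a z ≠ 0`; otherwise it is the
identity, because then `(a z)⁻¹ = 0`. -/
def kerProj (a : Dual K E) (z : E) : E →ₗ[K] E :=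
  LinearMap.id - ((a z)⁻¹ • a).smulRight z

lemma kerProj_apply (a : Dual K E) (z x : E) : kerProj a z x = x - ((a z)⁻¹ * a x) • z := rfl

lemma apply_kerProj_self {a : Dual K E} {z : E} (ha : a z ≠ 0) (x : E) :
    a (kerProj a z x) = 0 := by
  simp only [kerProj_apply, map_sub, map_smul, smul_eq_mul]
  field_simp
  ring

lemma eq_smul_add_of_comp_kerProj_eq {a f g : Dual K E} {z : E}
    (h : f ∘ₗ kerProj a z = g ∘ₗ kerProj a z) : f = ((f z - g z) / a z) • a + g := by
  ext x
  have hx : f x - (a z)⁻¹ * a x * f z = g x - (a z)⁻¹ * a x * g z := by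
    simpa [kerProj_apply] using LinearMap.congr_fun h x
  simp only [LinearMap.add_apply, LinearMap.smul_apply, smul_eq_mul, div_eq_mul_inv]
  linear_combination hx

end KerProj

variable [LinearOrder K]

section Farkas

variable [IsStrictOrderedRing K] {E ι κ : Type*} [AddCommGroup E] [Module K E]

lemma apply_nonneg_of_mem_hull {s : Set (Dual K E)} {f : Dual K E} {x : E}
    (hs : ∀ g ∈ s, 0 ≤ g x) (hf : f ∈ hull K s) : 0 ≤ f x := by
  have hle : hull K s ≤ dual (Dual.eval K E) {x} :=
    Submodule.span_le.2 fun g hg => by simpa using hs g hg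
  simpa using hle hf

theorem mem_hull_image_of_forall_nonneg (s : Finset ι) (α : ι → Dual K E) (γ : Dual K E)
    (h : ∀ x, (∀ i ∈ s, 0 ≤ α i x) → 0 ≤ γ x) : γ ∈ hull K (α '' s) := by
  classical
  induction s using Finset.induction_on generalizing α γ with
  | empty =>
    have hγ : γ = 0 := by
      ext x
      have hneg : 0 ≤ γ (-x) := h (-x) (by simp)
      exact le_antisymm (by simpa using hneg) (h x (by simp))
    exact hγ ▸ zero_mem _
  | insert j s _ ih =>
    rw [Finset.coe_insert, Set.image_insert_eq]
    by_cases hγ : ∀ x, (∀ i ∈ s, 0 ≤ α i x) → 0 ≤ γ x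
    · exact Submodule.span_mono (Set.subset_insert _ _) (ih α γ hγ)
    push Not at hγ
    obtain ⟨z, hsz, hγz⟩ := hγ
    have hjz : α j z < 0 := by
      by_contra! hjz
      exact hγz.not_ge (h z (Finset.forall_mem_insert _ _ _ |>.2 ⟨hjz, hsz⟩))
    set P := kerProj (α j) z
    have hproj : γ ∘ₗ P ∈ hull K ((fun i => α i ∘ₗ P) '' s) :=
      ih _ _ fun x hx => h (P x) <| Finset.forall_mem_insert _ _ _ |>.2
        ⟨(apply_kerProj_self hjz.ne x).ge, hx⟩
    obtain ⟨δ, hδ, hδγ⟩ : ∃ δ ∈ hull K (α '' s), δ ∘ₗ P = γ ∘ₗ P := by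
      have himage : (fun i => α i ∘ₗ P) '' s = P.dualMap '' (α '' s) := by
        rw [Set.image_image]
        rfl
      rw [himage] at hproj
      exact Submodule.map_span (P.dualMap.restrictScalars _) _ |>.ge hproj
    have hδz : 0 ≤ δ z := apply_nonneg_of_mem_hull (Set.forall_mem_image.2 hsz) hδ
    have hcoeff : 0 ≤ (γ z - δ z) / α j z :=
      div_nonneg_of_nonpos (by linarith) hjz.le
    exact Submodule.mem_span_insert.2
      ⟨⟨_, hcoeff⟩, δ, hδ, eq_smul_add_of_comp_kerProj_eq hδγ.symm⟩

variable [Fintype ι] [Fintype κ]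

theorem exists_nonneg_vecMul_eq (M : Matrix ι κ K) (p : κ → K)
    (h : ∀ x, 0 ≤ M *ᵥ x → 0 ≤ p ⬝ᵥ x) : ∃ y, 0 ≤ y ∧ y ᵥ* M = p := by
  classical
  have hmem : dotProductEquiv K κ p ∈ hull K (Set.range fun i => dotProductEquiv K κ (M i)) := by
    rw [← Set.image_univ, ← Finset.coe_univ]
    exact mem_hull_image_of_forall_nonneg _ _ _ fun x hx => h x fun i => hx i (Finset.mem_univ i)
  obtain ⟨y, hy⟩ := (Submodule.mem_span_range_iff_exists_fun _).1 hmem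
  refine ⟨fun i => y i, fun i => (y i).2, (dotProductEquiv K κ).injective ?_⟩
  rw [vecMul_eq_sum, map_sum, ← hy]
  exact Finset.sum_congr rfl fun i _ => map_smul _ _ _

theorem exists_nonneg_vecMul_le (M : Matrix ι κ K) (p : κ → K)
    (h : ∀ x, 0 ≤ x → 0 ≤ M *ᵥ x → 0 ≤ p ⬝ᵥ x) : ∃ y, 0 ≤ y ∧ y ᵥ* M ≤ p := by
  classical
  obtain ⟨y, hy, hyp⟩ := exists_nonneg_vecMul_eq (fromRows M 1) p fun x hx => by
    rw [fromRows_mulVec, one_mulVec] at hx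
    exact h x (fun k => hx (.inr k)) (fun i => hx (.inl i))
  rw [vecMul_fromRows, vecMul_one] at hyp
  exact ⟨y ∘ Sum.inl, fun i => hy (.inl i),
    hyp ▸ le_add_of_nonneg_right fun k => hy (.inr k)⟩

end Farkas

section LinearProgram

variable {R ι κ : Type*} [CommRing R] [PartialOrder R]

/-- The feasible set of the linear program in canonical form: minimize `p ⬝ᵥ x` subject to
`b ≤ M *ᵥ x` and `0 ≤ x`. -/
def primalFeasible [Fintype κ] (M : Matrix ι κ R) (b : ι → R) : Set (κ → R) :=
  {x | 0 ≤ x ∧ b ≤ M *ᵥ x}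

/-- The feasible set of the dual program: maximize `b ⬝ᵥ y` subject to `Mᵀ *ᵥ y ≤ p` (written
`y ᵥ* M ≤ p`) and `0 ≤ y`. -/
def dualFeasible [Fintype ι] (M : Matrix ι κ R) (p : κ → R) : Set (ι → R) :=
  {y | 0 ≤ y ∧ y ᵥ* M ≤ p}

lemma residual_dotProduct_sub_le [IsOrderedRing R] [Fintype ι] [Fintype κ] {M : Matrix ι κ R}
    {b : ι → R} {p : κ → R} {x x' : κ → R} {y y' : ι → R}
    (hx : x ∈ primalFeasible M b) (hy : y ∈ dualFeasible M p) (hx' : 0 ≤ x') (hy' : 0 ≤ y') :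
    (y ᵥ* M - p) ⬝ᵥ (x' - x) + (b - M *ᵥ x) ⬝ᵥ (y' - y) ≤ p ⬝ᵥ x - b ⬝ᵥ y := by
  have hdual : (y ᵥ* M) ⬝ᵥ x' ≤ p ⬝ᵥ x' := dotProduct_le_dotProduct_of_nonneg_right hy.2 hx'
  have hprimal : b ⬝ᵥ y' ≤ (M *ᵥ x) ⬝ᵥ y' := dotProduct_le_dotProduct_of_nonneg_right hx.2 hy'
  have hadjoint : (y ᵥ* M) ⬝ᵥ x = (M *ᵥ x) ⬝ᵥ y := by
    rw [← dotProduct_mulVec, dotProduct_comm]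
  simp only [sub_dotProduct, dotProduct_sub]
  linear_combination hdual + hprimal - hadjoint

variable [IsStrictOrderedRing K] [Fintype κ] {M : Matrix ι κ K} {b : ι → K} {p : κ → K}

lemma mul_le_dotProduct_of_isMinOn {x₀ x : κ → K} {t : K} (hx₀ : x₀ ∈ primalFeasible M b)
    (hmin : IsMinOn (p ⬝ᵥ ·) (primalFeasible M b) x₀) (ht : 0 ≤ t) (hx : 0 ≤ x)
    (hMx : t • b ≤ M *ᵥ x) : t * (p ⬝ᵥ x₀) ≤ p ⬝ᵥ x := by
  -- Rescaling `x₀ + x` instead of `x` treats `t = 0`, a recession direction, like `t > 0`.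
  have ht' : 0 < 1 + t := by positivity
  have hfeas : (1 + t)⁻¹ • (x₀ + x) ∈ primalFeasible M b := by
    refine ⟨smul_nonneg (inv_nonneg.2 ht'.le) (add_nonneg hx₀.1 hx), ?_⟩
    rw [mulVec_smul, le_inv_smul_iff_of_pos ht', mulVec_add, add_smul, one_smul]
    exact add_le_add hx₀.2 hMx
  have hle : p ⬝ᵥ x₀ ≤ p ⬝ᵥ ((1 + t)⁻¹ • (x₀ + x)) := hmin hfeas
  rw [dotProduct_smul, le_inv_smul_iff_of_pos ht', smul_eq_mul, dotProduct_add] at hle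
  linarith

variable [Fintype ι]

theorem exists_dualFeasible_dotProduct_le {x : κ → K} (hx : x ∈ primalFeasible M b)
    (hmin : IsMinOn (p ⬝ᵥ ·) (primalFeasible M b) x) :
    ∃ y ∈ dualFeasible M p, p ⬝ᵥ x ≤ b ⬝ᵥ y := by
  -- Farkas' lemma for the homogenized system `t • b ≤ M *ᵥ z`, `0 ≤ z`, `0 ≤ t`.
  obtain ⟨y, hy, hyM⟩ := exists_nonneg_vecMul_le
    (fromCols M (replicateCol Unit (-b))) (Sum.elim p fun _ => -(p ⬝ᵥ x)) fun w hw hMw => by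
      obtain ⟨z, t, rfl⟩ : ∃ z t, w = Sum.elim z (Function.const Unit t) :=
        ⟨w ∘ Sum.inl, w (.inr ()), by ext (_ | _) <;> rfl⟩
      have hMz : t • b ≤ M *ᵥ z := by
        have hcol : replicateCol Unit (-b) *ᵥ Function.const Unit t = -(t • b) := by
          ext i
          simp [mulVec, mul_comm]
        rwa [fromCols_mulVec_sumElim, hcol, ← sub_eq_add_neg, sub_nonneg] at hMw
      have hle : t * (p ⬝ᵥ x) ≤ p ⬝ᵥ z :=
        mul_le_dotProduct_of_isMinOn hx hmin (hw (.inr ())) (fun k => hw (.inl k)) hMz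
      rw [sumElim_dotProduct_sumElim]
      simpa [dotProduct, mul_comm] using hle
  rw [vecMul_fromCols, Sum.elim_le_elim_iff] at hyM
  refine ⟨y, ⟨hy, hyM.1⟩, ?_⟩
  have hby : y ⬝ᵥ -b ≤ -(p ⬝ᵥ x) := hyM.2 ()
  rwa [dotProduct_neg, neg_le_neg_iff, dotProduct_comm y] at hby

theorem dotProduct_le_of_isMinOn_of_isMaxOn {x : κ → K} {y : ι → K}
    (hx : x ∈ primalFeasible M b) (hmin : IsMinOn (p ⬝ᵥ ·) (primalFeasible M b) x)
    (hmax : IsMaxOn (b ⬝ᵥ ·) (dualFeasible M p) y) : p ⬝ᵥ x ≤ b ⬝ᵥ y :=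
  let ⟨_, hy', hle⟩ := exists_dualFeasible_dotProduct_le hx hmin
  hle.trans (hmax hy')

theorem residual_dotProduct_sub_nonpos {x x' : κ → K} {y y' : ι → K}
    (hx : x ∈ primalFeasible M b) (hmin : IsMinOn (p ⬝ᵥ ·) (primalFeasible M b) x)
    (hy : y ∈ dualFeasible M p) (hmax : IsMaxOn (b ⬝ᵥ ·) (dualFeasible M p) y)
    (hx' : 0 ≤ x') (hy' : 0 ≤ y') :
    (y ᵥ* M - p) ⬝ᵥ (x' - x) + (b - M *ᵥ x) ⬝ᵥ (y' - y) ≤ 0 :=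
  (residual_dotProduct_sub_le hx hy hx' hy').trans
    (sub_nonpos.2 (dotProduct_le_of_isMinOn_of_isMaxOn hx hmin hmax))

end LinearProgram

section TwoBlocks

variable {R ι κ μ : Type*} [CommRing R]

lemma residual_fromRows_neg_dotProduct_sub [Fintype ι] [Fintype κ] [Fintype μ]
    (D : Matrix ι κ R) (B : Matrix μ κ R) (p x x' : κ → R) (c l l' : ι → R) (r v v' : μ → R) :
    (Sum.elim l v ᵥ* fromRows D (-B) - p) ⬝ᵥ (x' - x) +
        (Sum.elim c (-r) - fromRows D (-B) *ᵥ x) ⬝ᵥ (Sum.elim l' v' - Sum.elim l v) =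
      (Dᵀ *ᵥ l - p - Bᵀ *ᵥ v) ⬝ᵥ (x' - x) + (c - D *ᵥ x) ⬝ᵥ (l' - l) +
        (B *ᵥ x - r) ⬝ᵥ (v' - v) := by
  rw [sumElim_vecMul_fromRows, fromRows_mulVec, ← Sum.elim_sub_sub, ← Sum.elim_sub_sub,
    sumElim_dotProduct_sumElim, mulVec_transpose, mulVec_transpose, vecMul_neg, neg_mulVec,
    neg_sub_neg, ← add_assoc, ← sub_eq_add_neg, sub_right_comm]

variable [PartialOrder R]

lemma sumElim_mem_dualFeasible_fromRows_neg [Fintype ι] [Fintype μ] {D : Matrix ι κ R}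
    {B : Matrix μ κ R} {p : κ → R} {l : ι → R} {v : μ → R} :
    Sum.elim l v ∈ dualFeasible (fromRows D (-B)) p ↔
      Dᵀ *ᵥ l - Bᵀ *ᵥ v ≤ p ∧ 0 ≤ l ∧ 0 ≤ v := by
  rw [dualFeasible, Set.mem_ofPred_eq, sumElim_vecMul_fromRows, vecMul_neg, ← sub_eq_add_neg,
    mulVec_transpose, mulVec_transpose, ← Sum.elim_zero_zero, Sum.elim_le_elim_iff]
  tauto

variable [IsOrderedRing R]

lemma mem_primalFeasible_fromRows_neg [Fintype κ] {D : Matrix ι κ R} {B : Matrix μ κ R}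
    {c : ι → R} {r : μ → R} {x : κ → R} :
    x ∈ primalFeasible (fromRows D (-B)) (Sum.elim c (-r)) ↔
      c ≤ D *ᵥ x ∧ B *ᵥ x ≤ r ∧ 0 ≤ x := by
  rw [primalFeasible, Set.mem_ofPred_eq, fromRows_mulVec, Sum.elim_le_elim_iff, neg_mulVec,
    neg_le_neg_iff]
  tauto

theorem stmt0_general [IsStrictOrderedRing K] [Fintype ι] [Fintype κ] [Fintype μ]
    (D : Matrix ι κ K) (B : Matrix μ κ K) {p x : κ → K} {c l : ι → K} {r v : μ → K}
    (hx : c ≤ D *ᵥ x ∧ B *ᵥ x ≤ r ∧ 0 ≤ x)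
    (hmin : ∀ X, c ≤ D *ᵥ X → B *ᵥ X ≤ r → 0 ≤ X → p ⬝ᵥ x ≤ p ⬝ᵥ X)
    (hlv : Dᵀ *ᵥ l - Bᵀ *ᵥ v ≤ p ∧ 0 ≤ l ∧ 0 ≤ v)
    (hmax : ∀ L V, Dᵀ *ᵥ L - Bᵀ *ᵥ V ≤ p → 0 ≤ L → 0 ≤ V →
      c ⬝ᵥ L - r ⬝ᵥ V ≤ c ⬝ᵥ l - r ⬝ᵥ v)
    {x' : κ → K} {l' : ι → K} {v' : μ → K} (hx' : 0 ≤ x') (hl' : 0 ≤ l') (hv' : 0 ≤ v') :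
    (Dᵀ *ᵥ l - p - Bᵀ *ᵥ v) ⬝ᵥ (x' - x) + (c - D *ᵥ x) ⬝ᵥ (l' - l) +
      (B *ᵥ x - r) ⬝ᵥ (v' - v) ≤ 0 := by
  have hxM := mem_primalFeasible_fromRows_neg.2 hx
  have hlvM := sumElim_mem_dualFeasible_fromRows_neg.2 hlv
  have hlv' : 0 ≤ Sum.elim l' v' := Sum.forall.2 ⟨hl', hv'⟩
  have hxmin : IsMinOn (p ⬝ᵥ ·) (primalFeasible (fromRows D (-B)) (Sum.elim c (-r))) x :=
    fun X hX =>
      let ⟨hDX, hBX, hX₀⟩ := mem_primalFeasible_fromRows_neg.1 hX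
      hmin X hDX hBX hX₀
  have hlvmax : IsMaxOn (Sum.elim c (-r) ⬝ᵥ ·) (dualFeasible (fromRows D (-B)) p)
      (Sum.elim l v) := fun y hy => by
    obtain ⟨L, V, rfl⟩ : ∃ L V, y = Sum.elim L V := ⟨_, _, (Sum.elim_comp_inl_inr y).symm⟩
    obtain ⟨hLV, hL, hV⟩ := sumElim_mem_dualFeasible_fromRows_neg.1 hy
    simpa [sumElim_dotProduct_sumElim, neg_dotProduct, ← sub_eq_add_neg] using hmax L V hLV hL hV
  rw [← residual_fromRows_neg_dotProduct_sub]
  exact residual_dotProduct_sub_nonpos hxM hxmin hlvM hlvmax hx' hlv'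

end TwoBlocks

/-- if x* solves the primal LP and (λ*, v*) solves the dual LP,
then y* = (x*, λ*, v*) solves the variational inequality ⟨g(y*), y − y*⟩ ≤ 0 ∀ y ∈ Ω. -/
theorem stmt0 {n m : ℕ} (hn : 0 < n) (hm : 0 < m)
    (A : Matrix (Fin n) (Fin n) ℝ) (B : Matrix (Fin m) (Fin n) ℝ)
    (p c : Vec n → Vec n) (r : Vec m → Vec m)
    (xs lams : Vec n) (vs : Vec m)
    -- x* is feasible for the primal LP
    (hxfeas : (∀ j, c lams j ≤ ((1 - A) *ᵥ xs) j) ∧ (∀ i, (B *ᵥ xs) i ≤ r vs i) ∧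
      (∀ j, 0 ≤ xs j))
    -- x* minimizes ⟨p(x*), X⟩ over the primal feasible set
    (hxmin : ∀ X : Vec n, (∀ j, c lams j ≤ ((1 - A) *ᵥ X) j) → (∀ i, (B *ᵥ X) i ≤ r vs i) →
      (∀ j, 0 ≤ X j) → ip (p xs) xs ≤ ip (p xs) X)
    -- (λ*, v*) is feasible for the dual LP
    (hdfeas : (∀ j, ((1 - A)ᵀ *ᵥ lams) j - (Bᵀ *ᵥ vs) j ≤ p xs j) ∧
      (∀ j, 0 ≤ lams j) ∧ (∀ i, 0 ≤ vs i))
    -- (λ*, v*) maximizes ⟨c(λ*), Λ⟩ − ⟨r(v*), V⟩ over the dual feasible set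
    (hdmax : ∀ (Lam : Vec n) (V : Vec m), (∀ j, ((1 - A)ᵀ *ᵥ Lam) j - (Bᵀ *ᵥ V) j ≤ p xs j) →
      (∀ j, 0 ≤ Lam j) → (∀ i, 0 ≤ V i) →
      ip (c lams) Lam - ip (r vs) V ≤ ip (c lams) lams - ip (r vs) vs) :
    ∀ y ∈ Om n m,
      ipT (gOp A B p c r (xs, lams, vs)) (y - (xs, lams, vs)) ≤ 0 :=
  fun _ ⟨hx, hl, hv⟩ => stmt0_general (1 - A) B hxfeas hxmin hdfeas hdmax hx hl hv
end
end

section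
/- If y* = (x*, λ*, v*) ∈ Ω solves the variational inequality ⟨g(y*), y − y*⟩ ≤ 0 for all y ∈ Ω, then g(y*) ≤ 0 componentwise and ⟨g(y*), y*⟩ = 0; consequently the balance identity ⟨c(λ*), λ*⟩ = ⟨p(x*), x*⟩ + ⟨r(v*), v*⟩ holds (total consumption equals the sum of production and factor costs). -/
open Matrix Filter
open scoped BigOperators

noncomputable section

theorem forall_map_sub_nonpos_iff {E R : Type*} [AddGroup E] [AddGroup R] [PartialOrder R]
    [AddLeftMono R] {C : AddSubmonoid E} {x : E} (hx : x ∈ C) (φ : E →+ R) :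
    (∀ y ∈ C, φ (y - x) ≤ 0) ↔ (∀ y ∈ C, φ y ≤ 0) ∧ φ x = 0 := by
  refine ⟨fun h => ?_, fun ⟨h, hφx⟩ y hy => by simpa only [map_sub, hφx, sub_zero] using h y hy⟩
  have nonpos : ∀ y ∈ C, φ y ≤ 0 := fun y hy => by
    simpa only [add_sub_cancel_right] using h (y + x) (C.add_mem hy hx)
  have nonneg : 0 ≤ φ x := by
    simpa only [zero_sub, map_neg, Left.neg_nonpos_iff] using h 0 C.zero_mem
  exact ⟨nonpos, (nonpos x hx).antisymm nonneg⟩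

theorem forall_dotProduct_nonpos_iff {ι R : Type*} [Fintype ι] [Semiring R] [PartialOrder R]
    [IsOrderedRing R] {u : ι → R} : (∀ w, 0 ≤ w → u ⬝ᵥ w ≤ 0) ↔ u ≤ 0 := by
  classical
  refine ⟨fun h i => ?_, fun hu w hw => ?_⟩
  · calc
      u i = u ⬝ᵥ Pi.single i 1 := (dotProduct_single_one u i).symm
      _ ≤ 0 := h _ (Pi.single_nonneg.2 zero_le_one)
  · simpa only [zero_dotProduct] using dotProduct_le_dotProduct_of_nonneg_right hu hw

theorem transpose_mulVec_dotProduct {ι κ R : Type*} [Fintype ι] [Fintype κ]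
    [NonUnitalCommSemiring R] (M : Matrix κ ι R) (u : κ → R) (w : ι → R) :
    Mᵀ *ᵥ u ⬝ᵥ w = M *ᵥ w ⬝ᵥ u := by
  rw [dotProduct_comm, dotProduct_transpose_mulVec, dotProduct_comm]

theorem ip_eq_dotProduct {k : ℕ} (u v : Vec k) : ip u v = u ⬝ᵥ v :=
  rfl

section Triple

variable {n m : ℕ}

theorem mem_Om_iff_nonneg {y : Triple n m} : y ∈ Om n m ↔ 0 ≤ y :=
  Iff.rfl

theorem ipT_add (g y z : Triple n m) : ipT g (y + z) = ipT g y + ipT g z := by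
  simp only [ipT, ip_eq_dotProduct, Prod.fst_add, Prod.snd_add, dotProduct_add]
  ring

theorem forall_ipT_nonpos_iff {g : Triple n m} : (∀ y ∈ Om n m, ipT g y ≤ 0) ↔ g ≤ 0 := by
  simp only [mem_Om_iff_nonneg, ipT, ip_eq_dotProduct]
  refine ⟨fun h => ⟨?_, ?_, ?_⟩, fun ⟨h₁, h₂, h₃⟩ y ⟨hx, hl, hv⟩ => ?_⟩
  · refine forall_dotProduct_nonpos_iff.1 fun w hw => ?_
    simpa only [dotProduct_zero, add_zero] using h (w, 0, 0) ⟨hw, le_rfl, le_rfl⟩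
  · refine forall_dotProduct_nonpos_iff.1 fun w hw => ?_
    simpa only [dotProduct_zero, add_zero, zero_add] using h (0, w, 0) ⟨le_rfl, hw, le_rfl⟩
  · refine forall_dotProduct_nonpos_iff.1 fun w hw => ?_
    simpa only [dotProduct_zero, zero_add] using h (0, 0, w) ⟨le_rfl, le_rfl, hw⟩
  · exact add_nonpos (add_nonpos (forall_dotProduct_nonpos_iff.2 h₁ _ hx)
      (forall_dotProduct_nonpos_iff.2 h₂ _ hl)) (forall_dotProduct_nonpos_iff.2 h₃ _ hv)

theorem forall_ipT_sub_nonpos_iff {g x : Triple n m} (hx : x ∈ Om n m) :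
    (∀ y ∈ Om n m, ipT g (y - x) ≤ 0) ↔ g ≤ 0 ∧ ipT g x = 0 := by
  rw [← forall_ipT_nonpos_iff]
  exact forall_map_sub_nonpos_iff (C := AddSubmonoid.nonneg (Triple n m)) hx
    (AddMonoidHom.mk' (ipT g) (ipT_add g))

-- The matrix part of `gOp` is skew-symmetric, so it contributes nothing to `⟨g(y), y⟩`.
theorem ipT_gOp_self (A : Matrix (Fin n) (Fin n) ℝ) (B : Matrix (Fin m) (Fin n) ℝ)
    (p c : Vec n → Vec n) (r : Vec m → Vec m) (y : Triple n m) :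
    ipT (gOp A B p c r y) y = ip (c y.2.1) y.2.1 - (ip (p y.1) y.1 + ip (r y.2.2) y.2.2) := by
  simp only [ipT, ip_eq_dotProduct, gOp, sub_dotProduct, transpose_mulVec_dotProduct]
  ring

end Triple

/-- if y* = (x*, λ*, v*) ∈ Ω solves the variational inequality, then
g(y*) ≤ 0 componentwise, ⟨g(y*), y*⟩ = 0, and ⟨c(λ*), λ*⟩ = ⟨p(x*), x*⟩ + ⟨r(v*), v*⟩. -/
theorem stmt2 {n m : ℕ} (hn : 0 < n) (hm : 0 < m)
    (A : Matrix (Fin n) (Fin n) ℝ) (B : Matrix (Fin m) (Fin n) ℝ)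
    (p c : Vec n → Vec n) (r : Vec m → Vec m)
    (xs lams : Vec n) (vs : Vec m)
    (hOm : (xs, lams, vs) ∈ Om n m)
    (hVI : ∀ y ∈ Om n m, ipT (gOp A B p c r (xs, lams, vs)) (y - (xs, lams, vs)) ≤ 0) :
    -- g(y*) ≤ 0 componentwise
    ((∀ j, (gOp A B p c r (xs, lams, vs)).1 j ≤ 0) ∧
     (∀ j, (gOp A B p c r (xs, lams, vs)).2.1 j ≤ 0) ∧
     (∀ i, (gOp A B p c r (xs, lams, vs)).2.2 i ≤ 0)) ∧
    -- ⟨g(y*), y*⟩ = 0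
    ipT (gOp A B p c r (xs, lams, vs)) (xs, lams, vs) = 0 ∧
    -- balance identity: total consumption = production cost + factor cost
    ip (c lams) lams = ip (p xs) xs + ip (r vs) vs := by
  obtain ⟨⟨hg₁, hg₂, hg₃⟩, horth⟩ := (forall_ipT_sub_nonpos_iff hOm).1 hVI
  have hbalance := (ipT_gOp_self A B p c r (xs, lams, vs)).symm.trans horth
  exact ⟨⟨hg₁, hg₂, hg₃⟩, horth, sub_eq_zero.1 hbalance⟩
end
end

section
/- (Lemma 1) Suppose there exist α > 0, β > 0, γ > 0 such that ⟨p(x₁) − p(x₂), x₁ − x₂⟩ ≥ α‖x₁ − x₂‖² for all x₁, x₂ ∈ ℝ₊ⁿ, ⟨c(λ₁) − c(λ₂), λ₁ − λ₂⟩ ≤ −β‖λ₁ − λ₂‖² for all λ₁, λ₂ ∈ ℝ₊ⁿ, and ⟨r(v₁) − r(v₂), v₁ − v₂⟩ ≥ γ‖v₁ − v₂‖² for all v₁, v₂ ∈ ℝ₊ᵐ. Then with δ = min{α, β, γ} > 0, for all y₁, y₂ ∈ Ω one has ⟨g(y₁) − g(y₂), y₁ − y₂⟩ ≤ −δ‖y₁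 − y₂‖². -/
open Matrix Filter
open scoped BigOperators

noncomputable section

/-!
The operator `-g` is the block-diagonal map `(p, -c, r)` plus a linear map. In the linear map each
coupling matrix faces minus its transpose, so the quadratic form of this map vanishes and adding it
keeps the modulus of strong monotonicity. The modulus of the block-diagonal map is the least of the
three moduli.
-/

open LinearMap (BilinForm fst snd IsAdjointPair)

section BilinearForms

variable {R E F G : Type*} [CommRing R] [AddCommGroup E] [Module R E] [AddCommGroup F] [Module R F]
  [AddCommGroup G] [Module R G]

/-- The form `b x x' + b' y y'` on `E × F`. It puts the Euclidean inner product on a product of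
coordinate spaces, where the instances of `Prod` provide only the supremum norm. -/
def prodForm (b : BilinForm R E) (b' : BilinForm R F) : BilinForm R (E × F) :=
  b.compl₁₂ (fst R E F) (fst R E F) + b'.compl₁₂ (snd R E F) (snd R E F)

/-- The linear map `(x, y) ↦ (-K' y, K x)` coupling the two blocks of `E × F`. It is meant for `K'`
an adjoint of `K`, as the coupling of primal and dual variables in a saddle-point operator. -/
def skewCoupling (K : E →ₗ[R] F) (K' : F →ₗ[R] E) : E × F →ₗ[R] E × F :=
  (-(K' ∘ₗ snd R E F)).prod (K ∘ₗ fst R E F)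

variable {b : BilinForm R E} {b' : BilinForm R F} {b'' : BilinForm R G}

theorem prodForm_apply (x y : E × F) : prodForm b b' x y = b x.1 y.1 + b' x.2 y.2 := rfl

theorem skewCoupling_apply (K : E →ₗ[R] F) (K' : F →ₗ[R] E) (x : E × F) :
    skewCoupling K K' x = (-K' x.2, K x.1) := rfl

theorem prodForm_isNonneg [PartialOrder R] [IsOrderedAddMonoid R] (hb : b.IsNonneg)
    (hb' : b'.IsNonneg) : (prodForm b b').IsNonneg :=
  ⟨fun x => add_nonneg (hb.nonneg x.1) (hb'.nonneg x.2)⟩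

theorem isAdjointPair_prod_coprod {K : E →ₗ[R] F} {K' : F →ₗ[R] E} {M : E →ₗ[R] G}
    {M' : G →ₗ[R] E} (hK : IsAdjointPair b b' K K') (hM : IsAdjointPair b b'' M M') :
    IsAdjointPair b (prodForm b' b'') (K.prod M) (K'.coprod M') := fun x y => by
  simp only [prodForm_apply, LinearMap.prod_apply, Function.prod_apply, LinearMap.coprod_apply,
    map_add, hK x, hM x]

theorem prodForm_skewCoupling_self (hb : b.IsSymm) {K : E →ₗ[R] F} {K' : F →ₗ[R] E}
    (hK : IsAdjointPair b b' K K') (x : E × F) : prodForm b b' (skewCoupling K K' x) x = 0 := by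
  rw [prodForm_apply, skewCoupling_apply, hK, map_neg, LinearMap.neg_apply, hb.eq, neg_add_cancel]

end BilinearForms

/-- Strong monotonicity of `T` on `s` with modulus `μ`, where the form `b` takes the place of the
inner product. The sign of `μ` is not restricted: `μ = 0` is monotonicity and `μ < 0` weak
monotonicity. -/
def StronglyMonotoneOn {R E : Type*} [CommRing R] [LE R] [AddCommGroup E] [Module R E]
    (b : BilinForm R E) (T : E → E) (μ : R) (s : Set E) : Prop :=
  ∀ x ∈ s, ∀ y ∈ s, μ * b (x - y) (x - y) ≤ b (T x - T y) (x - y)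

section StronglyMonotone

variable {R E F G : Type*} [CommRing R] [LinearOrder R] [IsOrderedRing R] [AddCommGroup E]
  [Module R E] [AddCommGroup F] [Module R F] [AddCommGroup G] [Module R G] {b : BilinForm R E}
  {b' : BilinForm R F} {b'' : BilinForm R G} {s : Set E} {t : Set F} {u : Set G} {μ ν ξ : R}

theorem stronglyMonotoneOn_neg_iff {T : E → E} :
    StronglyMonotoneOn b (-T) μ s ↔
      ∀ x ∈ s, ∀ y ∈ s, b (T x - T y) (x - y) ≤ -μ * b (x - y) (x - y) := by
  simp only [StronglyMonotoneOn, Pi.neg_apply, ← neg_sub', map_neg, LinearMap.neg_apply, neg_mul,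
    le_neg]

theorem StronglyMonotoneOn.of_modulus_le {T : E → E} (hT : StronglyMonotoneOn b T ν s)
    (hb : b.IsNonneg) (h : μ ≤ ν) : StronglyMonotoneOn b T μ s := fun x hx y hy =>
  (mul_le_mul_of_nonneg_right h (hb.nonneg (x - y))).trans (hT x hx y hy)

theorem StronglyMonotoneOn.prodMap {T : E → E} {U : F → F} (hT : StronglyMonotoneOn b T μ s)
    (hU : StronglyMonotoneOn b' U ν t) (hb : b.IsNonneg) (hb' : b'.IsNonneg) :
    StronglyMonotoneOn (prodForm b b') (Prod.map T U) (min μ ν) (s ×ˢ t) := fun x hx y hy => by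
  have hT' := hT.of_modulus_le hb (min_le_left μ ν) x.1 hx.1 y.1 hy.1
  have hU' := hU.of_modulus_le hb' (min_le_right μ ν) x.2 hx.2 y.2 hy.2
  exact (mul_add _ _ _).trans_le (add_le_add hT' hU')

theorem StronglyMonotoneOn.add_linearMap {T : E → E} (hT : StronglyMonotoneOn b T μ s)
    {S : E →ₗ[R] E} (hS : ∀ x, 0 ≤ b (S x) x) : StronglyMonotoneOn b (T + S) μ s :=
  fun x hx y hy =>
    calc
      μ * b (x - y) (x - y) ≤ b (T x - T y) (x - y) := hT x hx y hy
      _ ≤ b (T x - T y) (x - y) + b (S (x - y)) (x - y) := le_add_of_nonneg_right (hS _)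
      _ = b ((T + S) x - (T + S) y) (x - y) := by
        rw [Pi.add_apply, Pi.add_apply, add_sub_add_comm, ← map_sub S, map_add b,
          LinearMap.add_apply]

theorem StronglyMonotoneOn.prodMap_add_skewCoupling {T : E → E} {U : F → F}
    (hT : StronglyMonotoneOn b T μ s) (hU : StronglyMonotoneOn b' U ν t)
    (hb : b.IsPosSemidef) (hb' : b'.IsNonneg) {K : E →ₗ[R] F} {K' : F →ₗ[R] E}
    (hK : IsAdjointPair b b' K K') :
    StronglyMonotoneOn (prodForm b b') (Prod.map T U + skewCoupling K K') (min μ ν) (s ×ˢ t) :=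
  (hT.prodMap hU hb.isNonneg hb').add_linearMap fun x =>
    (prodForm_skewCoupling_self hb.isSymm hK x).ge

theorem stmt4_general {p : E → E} {c : F → F} {r : G → G} {K : E →ₗ[R] F} {K' : F →ₗ[R] E}
    {M : E →ₗ[R] G} {M' : G →ₗ[R] E} (hp : StronglyMonotoneOn b p μ s)
    (hc : StronglyMonotoneOn b' (-c) ν t) (hr : StronglyMonotoneOn b'' r ξ u)
    (hK : IsAdjointPair b b' K K') (hM : IsAdjointPair b b'' M M') (hb : b.IsPosSemidef)
    (hb' : b'.IsNonneg) (hb'' : b''.IsNonneg) :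
    StronglyMonotoneOn (prodForm b (prodForm b' b''))
      (-fun y => (K' y.2.1 - p y.1 - M' y.2.2, c y.2.1 - K y.1, M y.1 - r y.2.2))
      (min μ (min ν ξ)) (s ×ˢ t ×ˢ u) := by
  have hKM : IsAdjointPair b (prodForm b' b'') (K.prod (-M)) (K'.coprod (-M')) :=
    isAdjointPair_prod_coprod hK (by simpa using hM.smul (-1))
  have h_decomp :
      (-fun y : E × F × G => (K' y.2.1 - p y.1 - M' y.2.2, c y.2.1 - K y.1, M y.1 - r y.2.2)) =
        Prod.map p (Prod.map (-c) r) + skewCoupling (K.prod (-M)) (K'.coprod (-M')) := by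
    funext ⟨x, l, v⟩
    simp only [Pi.neg_apply, Pi.add_apply, Prod.map_apply, skewCoupling_apply,
      LinearMap.coprod_apply, LinearMap.prod_apply, Function.prod_apply, LinearMap.neg_apply,
      Prod.neg_mk, Prod.mk_add_mk, Prod.mk.injEq]
    exact ⟨by abel, by abel, by abel⟩
  rw [h_decomp]
  exact hp.prodMap_add_skewCoupling (hc.prodMap hr hb' hb'') hb (prodForm_isNonneg hb' hb'')
    hKM

end StronglyMonotone

section DotProduct

variable {R ι κ : Type*} [CommRing R] [Fintype ι] [Fintype κ]

/-- The dot product on `ι → R` as a bilinear form over `R`: the case of `dotProductBilin` in which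
both scalar actions are the multiplication of `R`. -/
def dotForm (R ι : Type*) [CommRing R] [Fintype ι] : BilinForm R (ι → R) := dotProductBilin R R

theorem isAdjointPair_mulVecLin_transpose (M : Matrix κ ι R) :
    IsAdjointPair (dotForm R ι) (dotForm R κ) M.mulVecLin Mᵀ.mulVecLin :=
  fun x y => (dotProduct_comm _ _).trans (dotProduct_transpose_mulVec M x y).symm

theorem dotForm_isPosSemidef [LinearOrder R] [IsOrderedRing R] :
    (dotForm R ι).IsPosSemidef where
  eq x y := dotProduct_comm x y
  nonneg x := Finset.sum_nonneg fun i _ => mul_self_nonneg (x i)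

end DotProduct

theorem ip_eq_dotForm {k : ℕ} (u v : Vec k) : ip u v = dotForm ℝ (Fin k) u v := rfl

theorem ip_self_nonneg {k : ℕ} (u : Vec k) : 0 ≤ ip u u := dotForm_isPosSemidef.nonneg u

theorem nrm_sq {k : ℕ} (u : Vec k) : nrm u ^ 2 = ip u u := Real.sq_sqrt (ip_self_nonneg u)

theorem nrmT_sq {n m : ℕ} (y : Triple n m) : nrmT y ^ 2 = ipT y y :=
  Real.sq_sqrt <|
    add_nonneg (add_nonneg (ip_self_nonneg _) (ip_self_nonneg _)) (ip_self_nonneg _)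

theorem ipT_eq_prodForm {n m : ℕ} (y z : Triple n m) :
    ipT y z =
      prodForm (dotForm ℝ (Fin n)) (prodForm (dotForm ℝ (Fin n)) (dotForm ℝ (Fin m))) y z :=
  add_assoc _ _ _

theorem stronglyMonotoneOn_dotForm_iff {k : ℕ} {T : Vec k → Vec k} {μ : ℝ} {s : Set (Vec k)} :
    StronglyMonotoneOn (dotForm ℝ (Fin k)) T μ s ↔
      ∀ x ∈ s, ∀ y ∈ s, μ * nrm (x - y) ^ 2 ≤ ip (T x - T y) (x - y) := by
  simp only [StronglyMonotoneOn, nrm_sq, ip_eq_dotForm]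

theorem stronglyMonotoneOn_dotForm_neg_iff {k : ℕ} {T : Vec k → Vec k} {μ : ℝ} {s : Set (Vec k)} :
    StronglyMonotoneOn (dotForm ℝ (Fin k)) (-T) μ s ↔
      ∀ x ∈ s, ∀ y ∈ s, ip (T x - T y) (x - y) ≤ -μ * nrm (x - y) ^ 2 := by
  simp only [stronglyMonotoneOn_neg_iff, nrm_sq, ip_eq_dotForm]

theorem stronglyMonotoneOn_prodForm_neg_iff {n m : ℕ} {T : Triple n m → Triple n m} {μ : ℝ}
    {s : Set (Triple n m)} :
    StronglyMonotoneOn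
        (prodForm (dotForm ℝ (Fin n)) (prodForm (dotForm ℝ (Fin n)) (dotForm ℝ (Fin m)))) (-T) μ s ↔
      ∀ x ∈ s, ∀ y ∈ s, ipT (T x - T y) (x - y) ≤ -μ * nrmT (x - y) ^ 2 := by
  simp only [stronglyMonotoneOn_neg_iff, nrmT_sq, ipT_eq_prodForm]

/-- Lemma 1: if p, c, r are strongly monotone (increasing, decreasing,
increasing respectively) on the nonnegative orthants, then g is strongly monotone on Ω
with modulus δ = min{α, β, γ}. -/
theorem stmt4 {n m : ℕ} (hn : 0 < n) (hm : 0 < m)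
    (A : Matrix (Fin n) (Fin n) ℝ) (B : Matrix (Fin m) (Fin n) ℝ)
    (p c : Vec n → Vec n) (r : Vec m → Vec m)
    (α β γ : ℝ) (hα : 0 < α) (hβ : 0 < β) (hγ : 0 < γ)
    (hp : ∀ x₁ x₂ : Vec n, (∀ j, 0 ≤ x₁ j) → (∀ j, 0 ≤ x₂ j) →
      α * nrm (x₁ - x₂) ^ 2 ≤ ip (p x₁ - p x₂) (x₁ - x₂))
    (hc : ∀ l₁ l₂ : Vec n, (∀ j, 0 ≤ l₁ j) → (∀ j, 0 ≤ l₂ j) →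
      ip (c l₁ - c l₂) (l₁ - l₂) ≤ -β * nrm (l₁ - l₂) ^ 2)
    (hr : ∀ v₁ v₂ : Vec m, (∀ i, 0 ≤ v₁ i) → (∀ i, 0 ≤ v₂ i) →
      γ * nrm (v₁ - v₂) ^ 2 ≤ ip (r v₁ - r v₂) (v₁ - v₂)) :
    ∀ y₁ ∈ Om n m, ∀ y₂ ∈ Om n m,
      ipT (gOp A B p c r y₁ - gOp A B p c r y₂) (y₁ - y₂) ≤
        -(min α (min β γ)) * nrmT (y₁ - y₂) ^ 2 := by
  have key := stmt4_general (s := Set.Ici 0) (t := Set.Ici 0) (u := Set.Ici 0)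
    (stronglyMonotoneOn_dotForm_iff.2 fun x hx y hy => hp x y hx hy)
    (stronglyMonotoneOn_dotForm_neg_iff.2 fun x hx y hy => hc x y hx hy)
    (stronglyMonotoneOn_dotForm_iff.2 fun x hx y hy => hr x y hx hy)
    (isAdjointPair_mulVecLin_transpose (1 - A)) (isAdjointPair_mulVecLin_transpose B)
    dotForm_isPosSemidef dotForm_isPosSemidef.isNonneg dotForm_isPosSemidef.isNonneg
  exact stronglyMonotoneOn_prodForm_neg_iff.1 key
end
end

section
/- Suppose g is monotone in the sense ⟨g(y₁) − g(y₂), y₁ − y₂⟩ ≤ 0 for all y₁, y₂ ∈ Ω, and L-Lipschitz: ‖g(y₁) − g(y₂)‖ ≤ L‖y₁ − y₂‖ for all y₁, y₂ ∈ Ω. Let y* ∈ Ω solve the variational inequality ⟨g(y*), y − y*⟩ ≤ 0 for all y ∈ Ω. Let t > 0, y_s ∈ Ω, and define the extra pseudo-gradient step ŷ_s = P_Ω(y_s + t·g(y_s)), y_{s+1} = P_Ω(y_s + t·g(ŷ_s)). Then ‖y_{s+1} − y*‖² + (1 − 2(tL)²)‖y_s − ŷ_s‖² + ‖ŷ_s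 − y_{s+1}‖² ≤ ‖y_s − y*‖². -/
open Matrix Filter
open scoped BigOperators

noncomputable section

/-!
A projection `p` of `x + v` onto `K` satisfies the three-point inequality
`‖p - y‖² + ‖x - p‖² ≤ ‖x - y‖² + 2 ⟪v, p - y⟫` for every `y ∈ K`. Adding its instances for the
corrector `y_{s+1}` (at `y = y*`) and for the predictor `ŷ` (at `y = y_{s+1}`) cancels
`‖y_s - y_{s+1}‖²`. Monotonicity and the variational inequality give `⟪g ŷ, ŷ - y*⟫ ≤ 0`, so the
only error left is `2t ⟪g ŷ - g y_s, y_{s+1} - ŷ⟫`. Since `y_{s+1}` and `ŷ` are the projections of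
`y_s + t g ŷ` and `y_s + t g y_s`, nonexpansiveness bounds this error by
`2t² ‖g ŷ - g y_s‖² ≤ 2(tL)² ‖ŷ - y_s‖²`.
-/

open scoped RealInnerProductSpace

section InnerProductSpace

variable {E : Type*} [SeminormedAddCommGroup E] [InnerProductSpace ℝ E] {K : Set E}

/-- `p` is a projection of `x` onto `K`, expressed by the variational inequality rather than by
minimal distance; for convex `K` in a normed space the two agree by
`norm_eq_iInf_iff_real_inner_le_zero`. -/
def IsProjectionOn (K : Set E) (x p : E) : Prop :=
  p ∈ K ∧ ∀ y ∈ K, ⟪x - p, y - p⟫ ≤ 0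

namespace IsProjectionOn

theorem norm_sub_sq_add_norm_sub_sq_le {x v p y : E} (hp : IsProjectionOn K (x + v) p)
    (hy : y ∈ K) : ‖p - y‖ ^ 2 + ‖x - p‖ ^ 2 ≤ ‖x - y‖ ^ 2 + 2 * ⟪v, p - y⟫ := by
  have expand : ‖x - y‖ ^ 2 = ‖x - p‖ ^ 2 + 2 * ⟪x - p, p - y⟫ + ‖p - y‖ ^ 2 := by
    rw [← norm_add_sq_real, sub_add_sub_cancel]
  have obtuse : 0 ≤ ⟪x - p, p - y⟫ + ⟪v, p - y⟫ := by
    rw [← inner_add_left, sub_add_eq_add_sub, ← neg_sub y p, inner_neg_right]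
    exact neg_nonneg.2 (hp.2 y hy)
  linarith

theorem norm_sub_sq_le_inner {a b p q : E} (hp : IsProjectionOn K a p)
    (hq : IsProjectionOn K b q) : ‖p - q‖ ^ 2 ≤ ⟪a - b, p - q⟫ := by
  have split : ⟪a - b, p - q⟫ = ‖p - q‖ ^ 2 - ⟪a - p, q - p⟫ - ⟪b - q, p - q⟫ := by
    rw [← real_inner_self_eq_norm_sq, ← neg_sub p q, inner_neg_right, sub_neg_eq_add,
      ← inner_add_left, ← inner_sub_left]
    congr 1
    abel
  linarith [hp.2 q hq.1, hq.2 p hp.1]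

theorem norm_sub_le {a b p q : E} (hp : IsProjectionOn K a p) (hq : IsProjectionOn K b q) :
    ‖p - q‖ ≤ ‖a - b‖ := by
  have h : ‖p - q‖ * ‖p - q‖ ≤ ‖a - b‖ * ‖p - q‖ := by
    rw [← sq]
    exact (hp.norm_sub_sq_le_inner hq).trans (real_inner_le_norm _ _)
  rcases (norm_nonneg (p - q)).eq_or_lt with h0 | hpos
  · exact h0 ▸ norm_nonneg _
  · exact le_of_mul_le_mul_right h hpos

theorem inner_sub_le_norm_sub_sq {x v w p q : E} (hp : IsProjectionOn K (x + v) p)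
    (hq : IsProjectionOn K (x + w) q) : ⟪w - v, q - p⟫ ≤ ‖w - v‖ ^ 2 :=
  calc ⟪w - v, q - p⟫ ≤ ‖w - v‖ * ‖q - p‖ := real_inner_le_norm _ _
    _ ≤ ‖w - v‖ * ‖w - v‖ := by
      gcongr
      simpa only [add_sub_add_left_eq_sub] using hq.norm_sub_le hp
    _ = ‖w - v‖ ^ 2 := (sq _).symm

theorem norm_sub_sq_add_le_of_predictor_corrector {x v w p q z : E}
    (hp : IsProjectionOn K (x + v) p) (hq : IsProjectionOn K (x + w) q) (hz : z ∈ K)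
    (hw : ⟪w, p - z⟫ ≤ 0) :
    ‖q - z‖ ^ 2 + ‖x - p‖ ^ 2 + ‖p - q‖ ^ 2 ≤ ‖x - z‖ ^ 2 + 2 * ‖w - v‖ ^ 2 := by
  have corrector := hq.norm_sub_sq_add_norm_sub_sq_le hz
  have predictor := hp.norm_sub_sq_add_norm_sub_sq_le hq.1
  have split : ⟪w, q - z⟫ + ⟪v, p - q⟫ = ⟪w, p - z⟫ + ⟪w - v, q - p⟫ := by
    simp only [inner_sub_left, inner_sub_right]
    ring
  linarith [hp.inner_sub_le_norm_sub_sq hq]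

end IsProjectionOn

theorem inner_sub_nonpos_of_monotone {g : E → E} {z : E}
    (hmono : ∀ y₁ ∈ K, ∀ y₂ ∈ K, ⟪g y₁ - g y₂, y₁ - y₂⟫ ≤ 0) (hz : z ∈ K)
    (hVI : ∀ y ∈ K, ⟪g z, y - z⟫ ≤ 0) : ∀ y ∈ K, ⟪g y, y - z⟫ ≤ 0 := fun y hy => by
  have h := hmono y hy z hz
  rw [inner_sub_left] at h
  linarith [hVI y hy]

theorem stmt13_general {g : E → E} {L t : ℝ} {x p q z : E}
    (hlip : ∀ y₁ ∈ K, ∀ y₂ ∈ K, ‖g y₁ - g y₂‖ ≤ L * ‖y₁ - y₂‖)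
    (hz : z ∈ K) (hminty : ∀ y ∈ K, ⟪g y, y - z⟫ ≤ 0) (ht : 0 ≤ t) (hx : x ∈ K)
    (hp : IsProjectionOn K (x + t • g x) p) (hq : IsProjectionOn K (x + t • g p) q) :
    ‖q - z‖ ^ 2 + (1 - 2 * (t * L) ^ 2) * ‖x - p‖ ^ 2 + ‖p - q‖ ^ 2 ≤ ‖x - z‖ ^ 2 := by
  have hw : ⟪t • g p, p - z⟫ ≤ 0 := by
    rw [real_inner_smul_left]
    exact mul_nonpos_of_nonneg_of_nonpos ht (hminty p hp.1)
  have step : ‖t • g p - t • g x‖ ^ 2 ≤ (t * L) ^ 2 * ‖x - p‖ ^ 2 := by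
    rw [← smul_sub, norm_smul, Real.norm_of_nonneg ht, norm_sub_rev x, ← mul_pow, mul_assoc]
    gcongr
    exact hlip p hp.1 x hx
  linarith [hp.norm_sub_sq_add_le_of_predictor_corrector hq hz hw]

end InnerProductSpace

theorem dotProduct_sub_posPart_nonpos {ι R : Type*} [Fintype ι] [Ring R] [LinearOrder R]
    [IsOrderedRing R] (x : ι → R) {y : ι → R} (hy : 0 ≤ y) : (x - x⁺) ⬝ᵥ (y - x⁺) ≤ 0 := by
  refine Finset.sum_nonpos fun i _ => ?_
  simp only [Pi.sub_apply, Pi.posPart_apply]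
  rcases le_total (x i) 0 with h | h
  · simpa only [posPart_of_nonpos h, sub_zero] using mul_nonpos_of_nonpos_of_nonneg h (hy i)
  · simp only [posPart_of_nonneg h, sub_self, zero_mul, le_refl]

theorem ipT_eq_dotProduct {n m : ℕ} (y z : Triple n m) :
    ipT y z = y.1 ⬝ᵥ z.1 + y.2.1 ⬝ᵥ z.2.1 + y.2.2 ⬝ᵥ z.2.2 :=
  rfl

/-- The Euclidean inner product `ipT` on the triple space, whose seminorm is `nrmT`. It is not an
instance because `Triple n m` already carries the sup norm of a product. -/
abbrev ipTCore (n m : ℕ) : PreInnerProductSpace.Core ℝ (Triple n m) where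
  inner := ipT
  conj_inner_symm y z := by
    simp only [ipT_eq_dotProduct, conj_trivial, dotProduct_comm]
  re_inner_nonneg y :=
    add_nonneg (add_nonneg (dotProduct_self_star_nonneg y.1) (dotProduct_self_star_nonneg y.2.1))
      (dotProduct_self_star_nonneg y.2.2)
  add_left y z w := by
    simp only [ipT_eq_dotProduct, Prod.fst_add, Prod.snd_add, add_dotProduct]
    ring
  smul_left y z a := by
    simp only [ipT_eq_dotProduct, Prod.smul_fst, Prod.smul_snd, smul_dotProduct, smul_eq_mul,
      conj_trivial, mul_add]

theorem projOm_mem_Om {n m : ℕ} (y : Triple n m) : projOm y ∈ Om n m :=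
  ⟨fun _ => le_max_right _ _, fun _ => le_max_right _ _, fun _ => le_max_right _ _⟩

theorem ipT_sub_projOm_nonpos {n m : ℕ} (y : Triple n m) {z : Triple n m} (hz : z ∈ Om n m) :
    ipT (y - projOm y) (z - projOm y) ≤ 0 :=
  add_nonpos (add_nonpos (dotProduct_sub_posPart_nonpos y.1 hz.1)
    (dotProduct_sub_posPart_nonpos y.2.1 hz.2.1)) (dotProduct_sub_posPart_nonpos y.2.2 hz.2.2)

/-- the key one-step inequality of the extra pseudo-gradient method:
‖y_{s+1} − y*‖² + (1 − 2(tL)²)‖y_s − ŷ_s‖² + ‖ŷ_s − y_{s+1}‖² ≤ ‖y_s − y*‖². -/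
theorem stmt13 {n m : ℕ} (hn : 0 < n) (hm : 0 < m)
    (A : Matrix (Fin n) (Fin n) ℝ) (B : Matrix (Fin m) (Fin n) ℝ)
    (p c : Vec n → Vec n) (r : Vec m → Vec m)
    (L : ℝ)
    (hmono : ∀ y₁ ∈ Om n m, ∀ y₂ ∈ Om n m,
      ipT (gOp A B p c r y₁ - gOp A B p c r y₂) (y₁ - y₂) ≤ 0)
    (hlip : ∀ y₁ ∈ Om n m, ∀ y₂ ∈ Om n m,
      nrmT (gOp A B p c r y₁ - gOp A B p c r y₂) ≤ L * nrmT (y₁ - y₂))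
    (ys : Triple n m) (hys : ys ∈ Om n m)
    (hVI : ∀ y ∈ Om n m, ipT (gOp A B p c r ys) (y - ys) ≤ 0)
    (t : ℝ) (ht : 0 < t)
    (yc : Triple n m) (hyc : yc ∈ Om n m)
    (yh ynext : Triple n m)
    (hyh : yh = projOm (yc + t • gOp A B p c r yc))
    (hynext : ynext = projOm (yc + t • gOp A B p c r yh)) :
    nrmT (ynext - ys) ^ 2 + (1 - 2 * (t * L) ^ 2) * nrmT (yc - yh) ^ 2 +
      nrmT (yh - ynext) ^ 2 ≤ nrmT (yc - ys) ^ 2 := by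
  let _ := InnerProductSpace.Core.toSeminormedAddCommGroup (c := ipTCore n m)
  let _ := InnerProductSpace.ofCore (ipTCore n m)
  have isProj (y : Triple n m) : IsProjectionOn (Om n m) y (projOm y) :=
    ⟨projOm_mem_Om y, fun _ => ipT_sub_projOm_nonpos y⟩
  exact stmt13_general hlip hys (inner_sub_nonpos_of_monotone hmono hys hVI) ht.le hyc
    (hyh ▸ isProj _) (hynext ▸ isProj _)
end
end
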